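/- arXiv:math-ph/0406022 — 5 statements merged into one kernel-verified Lean document; each statement's English description precedes it below -/
import Mathlib

section
/- For every positive integer n and every sequence (E_i)_{i∈ℕ} of real numbers whose set of values C = {E_i : i ∈ ℕ} has no accumulation point in ℝ, there exist a real-analytic function f : ℝⁿ → ℝ and a bijection φ : ℕⁿ → ℕ such that f(I) = E_{φ(I)} for every multi-index I ∈ ℕⁿ (where ℕⁿ is regarded as a subset of ℝⁿ via the natural embedding). -/
lemma aux_term (k : ℕ) (c : ℂ) : ∃ t : ℂ → ℂ, Differentiable ℂ t ∧ (∀ j : ℕ, j < k → t j = 0) ∧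
    t k = c ∧ ∀ z : ℂ, ‖z‖ < (k : ℝ) / 2 → ‖t z‖ ≤ (1 / 2 : ℝ) ^ k := by
  rcases Nat.eq_zero_or_pos k with rfl | hk
  · refine ⟨fun _ => c, differentiable_const c, by simp, rfl, ?_⟩
    intro z hz
    simp at hz
    exact absurd hz (not_lt.mpr (norm_nonneg z))
  have hk' : (k : ℂ) ≠ 0 := by exact_mod_cast hk.ne'
  have hkr : (0 : ℝ) < k := by exact_mod_cast hk
  let q : ℂ → ℂ := fun z => ∏ j ∈ Finset.range k, (z - j)
  have hqd : Differentiable ℂ q := by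
    intro z
    exact DifferentiableAt.fun_finsetProd (fun i _ => by fun_prop)
  have hqk : q k ≠ 0 := by
    refine Finset.prod_ne_zero_iff.mpr fun j hj => ?_
    have := Finset.mem_range.mp hj
    exact sub_ne_zero.mpr (by exact_mod_cast this.ne')
  let r : ℂ → ℂ := fun z => c * q z / q k
  have hrd : Differentiable ℂ r := (hqd.const_mul c).div_const _
  obtain ⟨M, hM⟩ := (isCompact_closedBall (0 : ℂ) ((k : ℝ) / 2)).exists_bound_of_continuousOn
    hrd.continuous.continuousOn
  obtain ⟨N, hN⟩ := exists_pow_lt_of_lt_one (y := (1 / 2 : ℝ))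
    (show (0 : ℝ) < (1 / 2 : ℝ) ^ k / (|M| + 1) by positivity) (by norm_num)
  refine ⟨fun z => r z * (z / k) ^ N, hrd.mul ((differentiable_id.div_const _).pow N), ?_, ?_, ?_⟩
  · intro j hj
    have : q j = 0 := Finset.prod_eq_zero (Finset.mem_range.mpr hj) (sub_self _)
    simp [r, this]
  · simp [r, hqk, hk']
  · intro z hz
    have h1 : ‖r z‖ ≤ |M| + 1 :=
      (hM z (by simpa using hz.le)).trans ((le_abs_self M).trans (by linarith))
    have h2 : ‖z / k‖ ≤ 1 / 2 := by
      rw [norm_div, Complex.norm_natCast, div_le_iff₀ hkr]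
      linarith
    rw [norm_mul, norm_pow]
    calc ‖r z‖ * ‖z / k‖ ^ N ≤ (|M| + 1) * (1 / 2 : ℝ) ^ N := by gcongr
      _ ≤ (|M| + 1) * ((1 / 2 : ℝ) ^ k / (|M| + 1)) := by gcongr
      _ = _ := by field_simp

lemma aux_entire (a : ℕ → ℂ) : ∃ g : ℂ → ℂ, Differentiable ℂ g ∧ ∀ k : ℕ, g k = a k := by
  choose T hTd hT0 hTk hTb using aux_term
  let S : ℕ → ℂ → ℂ := fun k => Nat.rec (fun _ => 0) (fun k s z => s z + T k (a k - s k) z) k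
  have hS : ∀ k z, S (k + 1) z = S k z + T k (a k - S k k) z := fun k z => rfl
  let t : ℕ → ℂ → ℂ := fun k => T k (a k - S k k)
  have hSt : ∀ k z, S k z = ∑ j ∈ Finset.range k, t j z := by
    intro k z
    induction k with
    | zero => rfl
    | succ k ih => rw [hS, Finset.sum_range_succ, ih]
  refine ⟨fun z => ∑' j, t j z, ?_, ?_⟩
  · intro z
    have hex : ∀ j : ℕ, ∃ M : ℝ, ∀ w ∈ Metric.closedBall (0 : ℂ) (‖z‖ + 1), ‖t j w‖ ≤ M := fun j =>
      (isCompact_closedBall (0 : ℂ) (‖z‖ + 1)).exists_bound_of_continuousOn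
        (hTd j _).continuous.continuousOn
    choose M hM using hex
    classical
    let u : ℕ → ℝ := fun j => if ‖z‖ + 1 ≤ (j : ℝ) / 2 then (1 / 2 : ℝ) ^ j else M j
    have hu : Summable u := by
      refine (summable_geometric_of_lt_one (r := (1 / 2 : ℝ)) (by norm_num) (by norm_num)).congr_cofinite ?_
      rw [Nat.cofinite_eq_atTop]
      obtain ⟨K, hK⟩ := exists_nat_ge (2 * (‖z‖ + 1))
      filter_upwards [Filter.eventually_ge_atTop K] with j hj
      have : (K : ℝ) ≤ j := by exact_mod_cast hj
      simp only [u]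
      rw [if_pos (by linarith)]
    have := Complex.differentiableOn_tsum_of_summable_norm (F := t) (U := Metric.ball (0 : ℂ) (‖z‖ + 1)) hu
      (fun j => (hTd j _).differentiableOn) Metric.isOpen_ball (by
        intro j w hw
        simp only [u]
        split_ifs with h
        · exact hTb j _ w (lt_of_lt_of_le (by simpa using hw) h)
        · exact hM j w (Metric.ball_subset_closedBall hw))
    exact this.differentiableAt (Metric.isOpen_ball.mem_nhds (by simp))
  · intro k
    have h : ∑' j, t j (k : ℂ) = ∑ j ∈ Finset.range (k + 1), t j k := by
      refine tsum_eq_sum fun j hj => ?_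
      simp only [Finset.mem_range, not_lt] at hj
      exact hT0 j _ k (by omega)
    show ∑' j, t j (k : ℂ) = a k
    rw [h, ← hSt, hS, hTk]
    ring

lemma aux_real (a : ℕ → ℝ) : ∃ g : ℝ → ℝ, (∀ x, AnalyticAt ℝ g x) ∧ ∀ k : ℕ, g k = a k := by
  obtain ⟨g, hg, hga⟩ := aux_entire (fun k => (a k : ℂ))
  refine ⟨fun x => (g x).re, fun x => ?_, fun k => ?_⟩
  · have h1 : AnalyticAt ℝ g (Complex.ofRealCLM x) := (hg.analyticAt _).restrictScalars
    have h2 : AnalyticAt ℝ (fun y : ℝ => g (Complex.ofRealCLM y)) x :=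
      h1.comp (Complex.ofRealCLM.analyticAt x)
    exact (Complex.reCLM.analyticAt _).comp h2
  · have := hga k
    simp [this]

lemma aux_poly (n : ℕ) : ∃ (P : (Fin n → ℝ) → ℝ) (p : (Fin n → ℕ) → ℕ), (∀ x, AnalyticAt ℝ P x) ∧
    Function.Injective p ∧ ∀ I : Fin n → ℕ, P (fun j => (I j : ℝ)) = p I := by
  induction n with
  | zero => exact ⟨fun _ => 0, fun _ => 0, fun _ => analyticAt_const,
      fun _ _ _ => Subsingleton.elim _ _, by simp⟩
  | succ n ih =>
    obtain ⟨P, p, hP, hp, hPp⟩ := ih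
    refine ⟨fun x => (x 0 + P (fun j => x j.succ)) ^ 2 + P (fun j => x j.succ),
      fun I => (I 0 + p (fun j => I j.succ)) ^ 2 + p (fun j => I j.succ), ?_, ?_, ?_⟩
    · intro x
      have h0 : ∀ i : Fin (n + 1), AnalyticAt ℝ (fun y : Fin (n + 1) → ℝ => y i) x := fun i =>
        (ContinuousLinearMap.proj (R := ℝ) (φ := fun _ : Fin (n + 1) => ℝ) i).analyticAt x
      have h1 : AnalyticAt ℝ (fun y : Fin (n + 1) → ℝ => (fun j : Fin n => y j.succ)) x :=
        AnalyticAt.pi (fun j => h0 j.succ)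
      have h2 : AnalyticAt ℝ (fun y : Fin (n + 1) → ℝ => P (fun j : Fin n => y j.succ)) x :=
        AnalyticAt.comp (g := P) (hP _) h1
      exact (((h0 0).add h2).pow 2).add h2
    · intro I J h
      simp only at h
      generalize hb : p (fun j => I j.succ) = b at h
      generalize hd : p (fun j => J j.succ) = d at h
      have hs : I 0 + b = J 0 + d := by
        rcases lt_trichotomy (I 0 + b) (J 0 + d) with h' | h' | h'
        · nlinarith
        · exact h'
        · nlinarith
      have hbd : b = d := by rw [hs] at h; omega
      have h00 : I 0 = J 0 := by omega
      have ht := hp (hb.trans (hbd.trans hd.symm))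
      funext i
      refine Fin.cases h00 (fun j => congrFun ht j) i
    · intro I
      simp only [hPp (fun j => I j.succ)]
      push_cast
      rfl

/-- If the set of values of the sequence `(E i)` has no accumulation point
in `ℝ`, then the interpolating function `f : ℝⁿ → ℝ` with `f I = E (φ I)` for all
multi-indices `I ∈ ℕⁿ` (for some bijection `φ : ℕⁿ → ℕ`) can be chosen real-analytic. -/
theorem analytic_function_realizing_sequence (n : ℕ) (hn : 0 < n) (E : ℕ → ℝ)
    (hE : ∀ x : ℝ, ∃ U ∈ nhds x, (U ∩ Set.range E).Finite) :
    ∃ (f : (Fin n → ℝ) → ℝ) (φ : (Fin n → ℕ) ≃ ℕ),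
      (∀ x : Fin n → ℝ, AnalyticAt ℝ f x) ∧
      ∀ I : Fin n → ℕ, f (fun j => (I j : ℝ)) = E (φ I) := by
  obtain ⟨P, p, hP, hp, hPp⟩ := aux_poly n
  haveI : Nonempty (Fin n) := ⟨⟨0, hn⟩⟩
  obtain ⟨hden⟩ := nonempty_denumerable (Fin n → ℕ)
  let φ : (Fin n → ℕ) ≃ ℕ := Denumerable.eqv _
  obtain ⟨g, hg, hga⟩ := aux_real (fun k => E (φ (Function.invFun p k)))
  refine ⟨fun x => g (P x), φ, fun x => AnalyticAt.comp (g := g) (hg _) (hP x), fun I => ?_⟩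
  simp only [hPp, hga, Function.leftInverse_invFun hp I]
end

section
/- Let H be a bounded self-adjoint operator on a complex Hilbert space whose spectrum is a countable subset of ℂ. Then H has pure point spectrum, i.e., the closed linear span of the eigenvectors of H is the whole space. -/
/-- A bounded self-adjoint operator whose spectrum is countable has pure
point spectrum: the closed linear span of its eigenvectors is the whole space. -/
theorem countable_spectrum_implies_purePoint
    {𝓗 : Type*} [NormedAddCommGroup 𝓗] [InnerProductSpace ℂ 𝓗] [CompleteSpace 𝓗]
    (H : 𝓗 →L[ℂ] 𝓗) (hH : IsSelfAdjoint H) (hcount : (spectrum ℂ H).Countable) :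
    (Submodule.span ℂ {ψ : 𝓗 | ψ ≠ 0 ∧ ∃ μ : ℂ, H ψ = μ • ψ}).topologicalClosure = ⊤ := by
  rw [Submodule.topologicalClosure_eq_top_iff, Submodule.eq_bot_iff]
  intro x hx
  by_contra hx0
  have hort : ∀ ψ : 𝓗, ∀ μ : ℂ, H ψ = μ • ψ → inner ℂ ψ x = 0 := by
    intro ψ μ h
    by_cases h0 : ψ = 0
    · simp [h0]
    · exact (Submodule.mem_orthogonal _ _).1 hx ψ (Submodule.subset_span ⟨h0, μ, h⟩)
  have hN : IsStarNormal H := hH.isStarNormal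
  have hcs : CompactSpace (spectrum ℂ H) := isCompact_iff_compactSpace.1 (spectrum.isCompact H)
  set φ := cfcHom (R := ℂ) hN with hφ
  have hφc : Continuous φ := cfcHom_continuous hN
  have hφid : φ (.restrict (spectrum ℂ H) (.id ℂ)) = H := cfcHom_id hN
  let I : Ideal C(spectrum ℂ H, ℂ) :=
    { carrier := {f | φ f x = 0}
      add_mem' := by
        intro a b ha hb
        simp only [Set.mem_setOf_eq] at *
        simp [ha, hb]
      zero_mem' := by simp
      smul_mem' := by
        intro c f hf
        simp only [Set.mem_setOf_eq] at *
        simp [hf] }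
  have hI : ∀ f, f ∈ I ↔ φ f x = 0 := fun f => Iff.rfl
  have hIc : IsClosed (I : Set C(spectrum ℂ H, ℂ)) := by
    have : Continuous fun f => φ f x := hφc.clm_apply continuous_const
    exact isClosed_eq this continuous_const
  have hIeq := ContinuousMap.idealOfSet_ofIdeal_isClosed hIc
  set Z : Set (spectrum ℂ H) := (ContinuousMap.setOfIdeal I)ᶜ with hZ
  have hmem : ∀ f, f ∈ I ↔ ∀ z ∈ Z, f z = 0 := by
    intro f
    rw [← hIeq, ContinuousMap.mem_idealOfSet]
  have hZc : IsClosed Z := (ContinuousMap.setOfIdeal_open I).isClosed_compl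
  have hZne : Z.Nonempty := by
    by_contra hne
    rw [Set.not_nonempty_iff_eq_empty] at hne
    have : (1 : C(spectrum ℂ H, ℂ)) ∈ I := by
      rw [hmem]; simp [hne]
    rw [hI, map_one] at this
    exact hx0 this
  -- isolated point
  obtain ⟨l, hlZ, hiso⟩ : ∃ l ∈ Z, IsClosed (Z \ {l}) := by
    have : Countable (spectrum ℂ H) := hcount.to_subtype
    have : CompactSpace Z := isCompact_iff_compactSpace.1 hZc.isCompact
    have : Nonempty Z := hZne.to_subtype
    obtain ⟨l, hl⟩ := nonempty_interior_of_iUnion_of_closed (X := Z) (f := fun z : Z => {z})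
      (fun z => isClosed_singleton) (by ext; simp)
    have hop : IsOpen ({l} : Set Z) := by
      obtain ⟨y, hy⟩ := hl
      have : y = l := Set.mem_singleton_iff.1 (interior_subset hy)
      subst this
      have h2 : interior {y} = ({y} : Set Z) :=
        Set.Subset.antisymm interior_subset (by simpa using hy)
      rw [← h2]; exact isOpen_interior
    refine ⟨l, l.2, ?_⟩
    have h3 := hZc.isClosedEmbedding_subtypeVal.isClosedMap _ hop.isClosed_compl
    convert h3 using 1
    ext z
    simp [Subtype.ext_iff]
  obtain ⟨f, hfJ, hfl⟩ : ∃ f ∈ ContinuousMap.idealOfSet ℂ (Z \ {l})ᶜ, f l ≠ 0 := by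
    rw [← ContinuousMap.mem_setOfIdeal, ContinuousMap.setOfIdeal_ofSet_eq_interior,
      hiso.isOpen_compl.interior_eq]
    simp
  rw [ContinuousMap.mem_idealOfSet, compl_compl] at hfJ
  have hg : (ContinuousMap.restrict (spectrum ℂ H) (.id ℂ) - algebraMap ℂ _ (l : ℂ)) *
      (star f * f) ∈ I := by
    rw [hmem]
    intro z hz
    by_cases hzl : z = l
    · subst hzl; simp
    · simp [hfJ ⟨hz, hzl⟩]
  rw [hI, map_mul, map_sub, hφid, AlgHomClass.commutes] at hg
  have h1 := hort (φ (star f * f) x) l (by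
    simpa [sub_eq_zero, Algebra.algebraMap_eq_smul_one] using hg)
  rw [map_mul, map_star, ContinuousLinearMap.star_eq_adjoint, ContinuousLinearMap.mul_apply,
    ContinuousLinearMap.adjoint_inner_left, inner_self_eq_zero] at h1
  exact hfl ((hmem f).1 ((hI f).2 h1) l hlZ)
end

section
/- Let H be a bounded self-adjoint operator on an infinite-dimensional separable complex Hilbert space 𝓗 whose spectrum is a countable subset of ℂ, and let n be a positive integer. Then there exist bounded self-adjoint operators T₁, …, Tₙ on 𝓗 that pairwise commute and each commute with H, an orthonormal basis (e_k)_{k∈ℕ} of 𝓗 consisting of common eigenvectors of H and of every T_j, and real numbers λ_{j,k} with T_j e_k = λ_{j,k} • e_k, such that the map k ↦ (λ_{1,k}, …, λ_{n,k}) from ℕ to ℝⁿ is injective. -/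
open Topology in
theorem aux_isolated {S : Set ℂ} (hS : S.Countable) (hc : IsClosed S) (hne : S.Nonempty) :
    ∃ z ∈ S, ∃ U ∈ 𝓝 z, ∀ y ∈ U ∩ S, y = z := by
  by_contra! h
  have hp : Perfect S := ⟨hc, preperfect_iff_nhds.2 fun x hx U hU => h x hx U hU⟩
  obtain ⟨f, hf, -, hinj⟩ := hp.exists_nat_bool_injection hne
  have h1 : (Set.range f).Countable := hS.mono hf
  have h2 : Countable (ℕ → Bool) := by
    rw [← Set.countable_univ_iff]
    refine Set.countable_of_injective_of_countable_image (f := f) hinj.injOn ?_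
    rwa [Set.image_univ]
  obtain ⟨g, hg⟩ := exists_surjective_nat (ℕ → Bool)
  obtain ⟨k, hk⟩ := hg (fun n => !(g n n))
  have := congrFun hk k
  simp at this

theorem aux_eigen {E : Type*} [NormedAddCommGroup E] [InnerProductSpace ℂ E] [CompleteSpace E]
    [Nontrivial E] (K : E →L[ℂ] E) (hK : IsSelfAdjoint K) (hcount : (spectrum ℂ K).Countable) :
    ∃ (z : ℂ) (v : E), v ≠ 0 ∧ K v = z • v := by
  classical
  obtain ⟨z, hz, U, hU, hiso⟩ := aux_isolated hcount (spectrum.isClosed K) (spectrum.nonempty K)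
  have hn : IsStarNormal K := hK.isStarNormal
  let f : ℂ → ℂ := fun x => if x = z then 1 else 0
  have hf : ContinuousOn f (spectrum ℂ K) := by
    intro x hx
    by_cases hxz : x = z
    · subst hxz
      refine (continuousWithinAt_const (b := (1 : ℂ))).congr_of_eventuallyEq ?_ (by simp [f])
      filter_upwards [mem_nhdsWithin_of_mem_nhds hU, self_mem_nhdsWithin] with y hy hy'
      simp [f, hiso y ⟨hy, hy'⟩]
    · refine (continuousWithinAt_const (b := (0 : ℂ))).congr_of_eventuallyEq ?_ (by simp [f, hxz])
      filter_upwards [mem_nhdsWithin_of_mem_nhds (isOpen_ne.mem_nhds hxz)] with y hy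
      simp only [f]; rw [if_neg hy]
  have hp0 : cfc f K ≠ 0 := by
    intro h0
    rw [← cfc_zero ℂ K] at h0
    have := eqOn_of_cfc_eq_cfc h0 hf continuousOn_const hn hz
    simp [f] at this
  have hmul : K * cfc f K = z • cfc f K := by
    conv_lhs => rw [← cfc_id' ℂ K]
    rw [cfc_id' ℂ K]
    nth_rw 1 [← cfc_id' ℂ K]
    rw [← cfc_mul (fun x => x) f K continuousOn_id hf, ← cfc_smul z f K hf]
    refine cfc_congr fun x _ => ?_
    by_cases hxz : x = z <;> simp [f, hxz]
  obtain ⟨w, hw⟩ : ∃ w, cfc f K w ≠ 0 := by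
    by_contra! h
    exact hp0 (ContinuousLinearMap.ext h)
  exact ⟨z, cfc f K w, hw, by simpa using congrArg (fun A : E →L[ℂ] E => A w) hmul⟩

open Module.End in
theorem aux_bot {E : Type*} [NormedAddCommGroup E] [InnerProductSpace ℂ E] [CompleteSpace E]
    (H : E →L[ℂ] E) (hH : IsSelfAdjoint H) (hcount : (spectrum ℂ H).Countable) :
    (⨆ μ, eigenspace (H : E →ₗ[ℂ] E) μ)ᗮ = ⊥ := by
  have hsym : (H : E →ₗ[ℂ] E).IsSymmetric :=
    ContinuousLinearMap.isSelfAdjoint_iff_isSymmetric.1 hH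
  set W := (⨆ μ, eigenspace (H : E →ₗ[ℂ] E) μ)ᗮ with hW
  have hinv : ∀ w ∈ W, H w ∈ W := fun w hw =>
    hsym.orthogonalComplement_iSup_eigenspaces_invariant hw
  have hmem : ∀ w, w ∈ W ↔ ∀ (μ : ℂ) (v : E), H v = μ • v → inner ℂ v w = 0 := by
    intro w
    rw [hW, ← Submodule.iInf_orthogonal, Submodule.mem_iInf]
    refine forall_congr' fun μ => ?_
    rw [Submodule.mem_orthogonal]
    refine forall_congr' fun v => ?_
    rw [mem_eigenspace_iff]; rfl
  by_contra hne
  have : Nontrivial W := Submodule.nontrivial_iff_ne_bot.2 hne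
  have : CompleteSpace W := by rw [hW]; infer_instance
  let K : W →L[ℂ] W := (H.comp W.subtypeL).codRestrict W (fun w => hinv w w.2)
  have hKc : ∀ w : W, ((K w : W) : E) = H w := fun w => rfl
  have hK : IsSelfAdjoint K := by
    rw [ContinuousLinearMap.isSelfAdjoint_iff_isSymmetric]
    intro x y
    exact hsym x y
  have hsub : spectrum ℂ K ⊆ spectrum ℂ H := by
    intro z hz
    by_contra hzH
    apply hz
    rw [spectrum.notMem_iff] at hzH
    obtain ⟨u, hu⟩ := hzH
    have h1 : ∀ x, z • (u⁻¹.1 x) - H (u⁻¹.1 x) = x := by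
      intro x
      have := congrArg (fun A : E →L[ℂ] E => A x) u.mul_inv
      rw [hu] at this
      simpa [Algebra.algebraMap_eq_smul_one] using this
    have h2 : ∀ x, u⁻¹.1 (z • x - H x) = x := by
      intro x
      have := congrArg (fun A : E →L[ℂ] E => A x) u.inv_mul
      rw [hu] at this
      simpa [Algebra.algebraMap_eq_smul_one] using this
    have hR : ∀ w ∈ W, u⁻¹.1 w ∈ W := by
      intro w hw
      rw [hmem] at hw ⊢
      intro μ v hv
      by_cases hv0 : v = 0
      · simp [hv0]
      have hμ : (starRingEnd ℂ) μ = μ := hsym.conj_eigenvalue_eq_self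
        (hasEigenvalue_of_hasEigenvector ⟨mem_eigenspace_iff.2 hv, hv0⟩)
      have hzμ : z ≠ μ := by
        rintro rfl
        have := h2 v
        rw [hv, sub_self, map_zero] at this
        exact hv0 this.symm
      have h3 : inner ℂ v (H (u⁻¹.1 w)) = μ * inner ℂ v (u⁻¹.1 w) := by
        have := hsym v (u⁻¹.1 w)
        simp only [ContinuousLinearMap.coe_coe] at this
        rw [← this, hv, inner_smul_left, hμ]
      have h4 := hw μ v hv
      rw [← h1 w, inner_sub_right, inner_smul_right, h3, ← sub_mul] at h4
      exact (mul_eq_zero.1 h4).resolve_left (sub_ne_zero.2 hzμ)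
    let R : W →L[ℂ] W := (u⁻¹.1.comp W.subtypeL).codRestrict W (fun w => hR w w.2)
    refine ⟨⟨algebraMap ℂ _ z - K, R, ?_, ?_⟩, rfl⟩
    · ext w
      have := h1 w
      simp only [Algebra.algebraMap_eq_smul_one]
      exact this
    · ext w
      have := h2 w
      simp only [Algebra.algebraMap_eq_smul_one]
      exact this
  obtain ⟨z, v, hv0, hv⟩ := aux_eigen K hK (hcount.mono hsub)
  have := (hmem v).1 v.2 z v (by rw [← hKc, hv]; rfl)
  rw [inner_self_eq_zero] at this
  exact hv0 (Subtype.ext this)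

theorem aux_countable {E ι : Type*} [NormedAddCommGroup E] [InnerProductSpace ℂ E]
    [TopologicalSpace.SeparableSpace E] {v : ι → E} (hv : Orthonormal ℂ v) : Countable ι := by
  refine Pairwise.countable_of_isOpen_disjoint (s := fun i => Metric.ball (v i) (1/2)) ?_
    (fun i => Metric.isOpen_ball) (fun i => ⟨v i, by simp⟩)
  intro i j hij
  apply Metric.ball_disjoint_ball
  have h : ‖v i - v j‖ * ‖v i - v j‖ = 2 := by
    rw [@norm_sub_mul_self ℂ, hv.2 hij, hv.1 i, hv.1 j]; norm_num
  rw [dist_eq_norm]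
  nlinarith [norm_nonneg (v i - v j)]

open Module.End in
theorem aux_basis {E : Type*} [NormedAddCommGroup E] [InnerProductSpace ℂ E] [CompleteSpace E]
    [TopologicalSpace.SeparableSpace E] (hdim : ¬ FiniteDimensional ℂ E)
    (H : E →L[ℂ] E) (hH : IsSelfAdjoint H) (hcount : (spectrum ℂ H).Countable) :
    ∃ e : HilbertBasis ℕ ℂ E, ∀ k, ∃ μ : ℂ, H (e k) = μ • e k := by
  have hsym : (H : E →ₗ[ℂ] E).IsSymmetric :=
    ContinuousLinearMap.isSelfAdjoint_iff_isSymmetric.1 hH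
  have hcs : ∀ μ, CompleteSpace (eigenspace (H : E →ₗ[ℂ] E) μ) := by
    intro μ
    apply IsClosed.completeSpace_coe (hs := ?_)
    have : (eigenspace (H : E →ₗ[ℂ] E) μ : Set E) = {x | H x = μ • x} := by
      ext x; exact mem_eigenspace_iff
    rw [this]
    exact isClosed_eq H.continuous (continuous_const_smul μ)
  choose w b hb using fun μ => exists_hilbertBasis ℂ (eigenspace (H : E →ₗ[ℂ] E) μ)
  let v : (Σ μ, w μ) → E := fun a => (b a.1 a.2 : E)
  have hv : Orthonormal ℂ v :=
    hsym.orthogonalFamily_eigenspaces.orthonormal_sigma_orthonormal (fun μ => (b μ).orthonormal)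
  have hve : ∀ a, H (v a) = a.1 • v a := fun a => mem_eigenspace_iff.1 (b a.1 a.2).2
  have hsp : (Submodule.span ℂ (Set.range v))ᗮ = ⊥ := by
    rw [eq_bot_iff, ← aux_bot H hH hcount, ← Submodule.iInf_orthogonal]
    refine le_iInf fun μ => ?_
    intro x hx
    rw [Submodule.mem_orthogonal] at hx ⊢
    intro y hy
    have hs := ((b μ).hasSum_repr ⟨y, hy⟩).mapL (Submodule.subtypeL _)
    have hs2 := hs.mapL (innerSL ℂ x)
    have hz : ∀ i, (innerSL ℂ x) ((Submodule.subtypeL _) ((b μ).repr ⟨y, hy⟩ i • b μ i)) = 0 := by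
      intro i
      have := hx (v ⟨μ, i⟩) (Submodule.subset_span ⟨_, rfl⟩)
      have h' := inner_eq_zero_symm.1 this
      simp only [map_smul, innerSL_apply_apply, Submodule.subtypeL_apply]
      rw [show inner ℂ x ((b μ i : eigenspace (H : E →ₗ[ℂ] E) μ) : E) = 0 from h', smul_zero]
    simp only [hz] at hs2
    have := hs2.unique hasSum_zero
    exact inner_eq_zero_symm.1 this
  have hcnt : Countable (Σ μ, w μ) := aux_countable hv
  have hinf : Infinite (Σ μ, w μ) := by
    by_contra hfin
    rw [not_infinite_iff_finite] at hfin
    have hfd : FiniteDimensional ℂ (Submodule.span ℂ (Set.range v)) :=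
      FiniteDimensional.span_of_finite ℂ (Set.finite_range v)
    have htop : Submodule.span ℂ (Set.range v) = ⊤ := Submodule.orthogonal_eq_bot_iff.1 hsp
    rw [htop] at hfd
    exact hdim (Module.finite_def.2 (Submodule.fg_top _ |>.1 (Module.finite_def.1 hfd)))
  obtain ⟨g⟩ : Nonempty (ℕ ≃ (Σ μ, w μ)) := nonempty_equiv_of_countable
  have hr : Set.range (v ∘ g) = Set.range v := g.surjective.range_comp v
  refine ⟨HilbertBasis.mkOfOrthogonalEqBot (hv.comp g g.injective) (by rw [hr, hsp]), fun k => ?_⟩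
  rw [HilbertBasis.coe_mkOfOrthogonalEqBot]
  exact ⟨_, hve (g k)⟩

theorem aux_diag {E : Type*} [NormedAddCommGroup E] [InnerProductSpace ℂ E] [CompleteSpace E]
    (e : HilbertBasis ℕ ℂ E) :
    ∃ T : E →L[ℂ] E, IsSelfAdjoint T ∧ ∀ k, T (e k) = (((1/2 : ℝ)^k : ℝ) : ℂ) • e k := by
  let F : ℕ → E →L[ℂ] E := fun k =>
    (((1/2 : ℝ)^k : ℝ) : ℂ) • InnerProductSpace.rankOne ℂ (e k) (e k)
  have hF : Summable F := by
    refine Summable.of_norm_bounded (g := fun k => (1/2 : ℝ)^k) summable_geometric_two fun k => ?_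
    simp [F, norm_smul, e.orthonormal.1 k]
  have hsa : ∀ k, star (F k) = F k := by
    intro k
    simp only [F, star_smul, ContinuousLinearMap.star_eq_adjoint,
      InnerProductSpace.adjoint_rankOne]
    simp
  refine ⟨∑' k, F k, ?_, fun k => ?_⟩
  · have := hF.hasSum.star
    simp only [hsa] at this
    exact this.unique hF.hasSum
  · have h1 := hF.hasSum.mapL (ContinuousLinearMap.apply ℂ E (e k))
    refine h1.unique ?_
    have h2 := hasSum_single (f := fun b => (ContinuousLinearMap.apply ℂ E (e k)) (F b)) k ?_
    · convert h2 using 1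
      simp [F, e.orthonormal.1 k]
    · intro j hj
      simp [F, e.orthonormal.2 hj]

/-- Every bounded self-adjoint operator with countable spectrum on an
infinite-dimensional separable complex Hilbert space is completely integrable: for every
positive integer `n` there exist `n` pairwise commuting bounded self-adjoint operators
`T j` commuting with `H`, and an orthonormal basis `(e k)` of common eigenvectors of `H`
and of all the `T j`, whose joint `T`-eigenvalues `k ↦ (λ 1 k, …, λ n k)` form an
injective map. -/
theorem countable_spectrum_hamiltonian_is_integrable
    {𝓗 : Type*} [NormedAddCommGroup 𝓗] [InnerProductSpace ℂ 𝓗] [CompleteSpace 𝓗]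
    [TopologicalSpace.SeparableSpace 𝓗] (hdim : ¬ FiniteDimensional ℂ 𝓗)
    (H : 𝓗 →L[ℂ] 𝓗) (hH : IsSelfAdjoint H) (hcount : (spectrum ℂ H).Countable)
    (n : ℕ) (hn : 0 < n) :
    ∃ (T : Fin n → 𝓗 →L[ℂ] 𝓗) (e : HilbertBasis ℕ ℂ 𝓗) (lam : Fin n → ℕ → ℝ),
      (∀ j, IsSelfAdjoint (T j)) ∧
      (∀ j k, T j * T k = T k * T j) ∧
      (∀ j, H * T j = T j * H) ∧
      (∀ k, ∃ μ : ℂ, H (e k) = μ • e k) ∧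
      (∀ j k, T j (e k) = (lam j k : ℂ) • e k) ∧
      Function.Injective (fun k : ℕ => fun j : Fin n => lam j k) := by
  obtain ⟨e, he⟩ := aux_basis hdim H hH hcount
  obtain ⟨T, hT, hTe⟩ := aux_diag e
  refine ⟨fun _ => T, e, fun _ k => (1/2 : ℝ)^k, fun _ => hT, fun _ _ => rfl, fun _ => ?_, he,
    fun _ k => hTe k, ?_⟩
  · have hd : Dense (Submodule.span ℂ (Set.range e) : Set 𝓗) :=
      Submodule.dense_iff_topologicalClosure_eq_top.2 e.dense_span
    refine ContinuousLinearMap.ext_on hd ?_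
    rintro _ ⟨k, rfl⟩
    obtain ⟨μ, hμ⟩ := he k
    simp only [mul_apply_eq_comp, hTe, hμ, map_smul]
    rw [smul_comm]
  · intro a b hab
    have := congrFun hab ⟨0, hn⟩
    exact (pow_right_injective₀ (by norm_num : (0:ℝ) < 1/2) (by norm_num)) this
end

section
/- Let H be a bounded self-adjoint operator on a complex Hilbert space and let ε > 0. Then there exists a bounded self-adjoint operator T with ‖H − T‖ ≤ ε (operator norm) such that the spectrum of T is countable; in particular T has pure point spectrum. -/
theorem aux_symm
    {𝓗 : Type*} [NormedAddCommGroup 𝓗] [InnerProductSpace ℂ 𝓗] [CompleteSpace 𝓗]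
    (H : 𝓗 →L[ℂ] 𝓗) (hH : IsSelfAdjoint H) (r : ℝ) (hr : ‖H‖ ≤ r) :
    ∃ S : 𝓗 →L[ℂ] 𝓗, IsSelfAdjoint S ∧ S * S = 1 ∧
      (∀ A : 𝓗 →L[ℂ] 𝓗, IsSelfAdjoint A → Commute H A → Commute S A) ∧
      ‖H - (r / 2) • S‖ ≤ r / 2 := by
  have hr0 : 0 ≤ r := (norm_nonneg H).trans hr
  set F : 𝓗 →L[ℂ] 𝓗 := cfc (fun x : ℝ => max x 0) H with hF
  set G : 𝓗 →L[ℂ] 𝓗 := cfc (fun x : ℝ => max (-x) 0) H with hG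
  have hGs : star G = G := cfc_predicate (R := ℝ) _ H
  have hFG : F * G = 0 := by
    rw [hF, hG, ← cfc_mul _ _ H]
    have : (fun x : ℝ => max x 0 * max (-x) 0) = fun _ => 0 := by
      funext x
      rcases le_total x 0 with h | h
      · rw [max_eq_right h, zero_mul]
      · rw [max_eq_right (by linarith : -x ≤ 0), mul_zero]
    rw [this]
    exact cfc_const_zero ℝ H
  have hsub : F - G = H := by
    rw [hF, hG, ← cfc_sub _ _ H]
    conv_rhs => rw [← cfc_id ℝ H]
    congr 1
    funext x
    rcases le_total x 0 with h | h
    · rw [max_eq_right h, max_eq_left (by linarith : 0 ≤ -x)]; simp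
    · rw [max_eq_left h, max_eq_right (by linarith : -x ≤ 0)]; simp
  have hadd : ‖F + G - (r / 2) • (1 : 𝓗 →L[ℂ] 𝓗)‖ ≤ r / 2 := by
    have h1 : (r / 2) • (1 : 𝓗 →L[ℂ] 𝓗) = cfc (fun _ : ℝ => r / 2) H := by
      rw [cfc_const (r / 2) H, Algebra.algebraMap_eq_smul_one]
    rw [h1, hF, hG, ← cfc_add H _ _, ← cfc_sub _ _ H]
    refine norm_cfc_le (by linarith) ?_
    intro x hx
    have hx1 : ‖x‖ ≤ r := by
      rcases subsingleton_or_nontrivial 𝓗 with h | h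
      · exact absurd hx (by
          have : Subsingleton (𝓗 →L[ℂ] 𝓗) := inferInstance
          simp [spectrum.of_subsingleton])
      · exact (spectrum.norm_le_norm_of_mem hx).trans hr
    rw [Real.norm_eq_abs, abs_le] at *
    rcases le_total x 0 with h | h
    · rw [max_eq_right h, max_eq_left (by linarith : 0 ≤ -x)]; constructor <;> linarith
    · rw [max_eq_left h, max_eq_right (by linarith : -x ≤ 0)]; constructor <;> linarith
  set K : Submodule ℂ 𝓗 := F.ker with hK
  have hKc : IsClosed (K : Set 𝓗) := ContinuousLinearMap.isClosed_ker F
  have : CompleteSpace K := hKc.completeSpace_coe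
  set P : 𝓗 →L[ℂ] 𝓗 := K.starProjection with hP
  have hPs : star P = P := isSelfAdjoint_starProjection K
  have hPP : P * P = P := K.isIdempotentElem_starProjection
  have hPG : P * G = G := by
    ext v
    refine (K.starProjection_eq_self_iff).2 ?_
    have := DFunLike.congr_fun hFG v
    simpa [hK] using this
  have hFP : F * P = 0 := by
    ext v
    have : P v ∈ K := K.starProjection_apply_mem v
    simpa [hK] using this
  have hGP : G * P = G := by
    have := congrArg star hPG
    rwa [star_mul, hPs, hGs] at this
  have hSS : (1 - (2 : ℝ) • P) * (1 - (2 : ℝ) • P) = 1 := by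
    simp only [mul_sub, sub_mul, one_mul, mul_one, smul_mul_assoc, mul_smul_comm, hPP]
    module
  have hSs : star (1 - (2 : ℝ) • P) = 1 - (2 : ℝ) • P := by
    simp [hPs]
  refine ⟨1 - (2 : ℝ) • P, hSs, hSS, ?_, ?_⟩
  · intro A hA hHA
    have hFA : Commute F A := hHA.cfc_real _
    have h1 : P * (A * P) = A * P := by
      ext v
      refine (K.starProjection_eq_self_iff).2 ?_
      have h2 : F * (A * P) = 0 := by
        rw [← mul_assoc, hFA.eq, mul_assoc, hFP, mul_zero]
      have := DFunLike.congr_fun h2 v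
      simpa [hK] using this
    have h3 := congrArg star h1
    simp only [star_mul, hPs, hA.star_eq] at h3
    have : Commute P A := by
      show P * A = A * P
      rw [← h3, mul_assoc, h1]
    exact (Commute.one_left A).sub_left (this.smul_left _)
  · have hHS : H * (1 - (2 : ℝ) • P) = F + G := by
      rw [← hsub]
      simp only [mul_sub, sub_mul, mul_one, mul_smul_comm, hFP, hGP]
      module
    have h1 : H - (r / 2) • (1 - (2 : ℝ) • P)
        = (F + G - (r / 2) • (1 : 𝓗 →L[ℂ] 𝓗)) * (1 - (2 : ℝ) • P) := by
      rw [sub_mul, ← hHS, mul_assoc, hSS, mul_one, smul_mul_assoc, one_mul]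
    have hS1 : ‖1 - (2 : ℝ) • P‖ ≤ 1 := by
      have h2 := CStarRing.norm_star_mul_self (x := 1 - (2 : ℝ) • P)
      rw [hSs, hSS] at h2
      have h3 : ‖(1 : 𝓗 →L[ℂ] 𝓗)‖ ≤ 1 := ContinuousLinearMap.norm_id_le
      nlinarith [norm_nonneg (1 - (2 : ℝ) • P)]
    rw [h1]
    calc _ ≤ _ := norm_mul_le _ _
      _ ≤ r / 2 * 1 := by gcongr
      _ = r / 2 := mul_one _

theorem aux_iter
    {𝓗 : Type*} [NormedAddCommGroup 𝓗] [InnerProductSpace ℂ 𝓗] [CompleteSpace 𝓗] (n : ℕ) :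
    ∀ (H : 𝓗 →L[ℂ] 𝓗) (_ : IsSelfAdjoint H) (r : ℝ) (_ : ‖H‖ ≤ r),
    ∃ T : 𝓗 →L[ℂ] 𝓗, IsSelfAdjoint T ∧ ‖H - T‖ ≤ r / 2 ^ n ∧
      (∀ A : 𝓗 →L[ℂ] 𝓗, IsSelfAdjoint A → Commute H A → Commute T A) ∧
      ∃ (ι : Type) (_ : Fintype ι) (μ : ι → ℝ) (Q : ι → (𝓗 →L[ℂ] 𝓗)),
        ∑ i, Q i = 1 ∧ ∀ i, T * Q i = μ i • Q i := by
  induction n with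
  | zero =>
    intro H _ r hr
    refine ⟨0, .zero _, by simpa using hr, fun A _ _ => Commute.zero_left A,
      Unit, inferInstance, fun _ => 0, fun _ => 1, by simp, by simp⟩
  | succ n ih =>
    intro H hH r hr
    obtain ⟨S, hS, hSS, hSc, hSn⟩ := aux_symm H hH r hr
    have hcS : IsSelfAdjoint ((r / 2) • S) := (IsSelfAdjoint.all (r / 2)).smul hS
    obtain ⟨T, hT, hTn, hTc, ι, _, μ, Q, hQ, hTQ⟩ := ih (H - (r / 2) • S) (hH.sub hcS) _ hSn
    have hHS : Commute H S := (hSc H hH (.refl H)).symm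
    have hTS : Commute T S := hTc S hS (hHS.sub_left ((Commute.refl S).smul_left _))
    refine ⟨T + (r / 2) • S, hT.add hcS, ?_, ?_, ι × Bool, inferInstance,
      fun x => μ x.1 + (if x.2 then r / 2 else - (r / 2)),
      fun x => (if x.2 then (1 / 2 : ℝ) • (1 + S) else (1 / 2 : ℝ) • (1 - S)) * Q x.1, ?_, ?_⟩
    · have e : H - (T + (r / 2) • S) = H - (r / 2) • S - T := by abel
      rw [e]
      refine hTn.trans (le_of_eq ?_)
      rw [pow_succ]; field_simp
    · intro A hA hHA
      have hSA := hSc A hA hHA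
      exact (hTc A hA (hHA.sub_left (hSA.smul_left _))).add_left (hSA.smul_left _)
    · rw [Fintype.sum_prod_type]
      refine Eq.trans ?_ hQ
      refine Finset.sum_congr rfl fun i _ => ?_
      simp only [Fintype.sum_bool, if_true, Bool.false_eq_true, if_false]
      rw [← add_mul]
      have : (1 / 2 : ℝ) • (1 + S) + (1 / 2 : ℝ) • (1 - S) = 1 := by module
      rw [this, one_mul]
    · have e1 : ∀ i, T * (S * Q i) = μ i • (S * Q i) := by
        intro i
        rw [← mul_assoc, hTS.eq, mul_assoc, hTQ, mul_smul_comm]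
      have e2 : ∀ i, S * (S * Q i) = Q i := by
        intro i
        rw [← mul_assoc, hSS, one_mul]
      rintro ⟨i, b⟩
      cases b <;>
      · simp only [if_true, Bool.false_eq_true, if_false, add_mul, mul_add, sub_mul, mul_sub,
          smul_mul_assoc, mul_smul_comm, one_mul, e1, e2, hTQ, smul_add, smul_sub]
        module

/-- Operators with countable spectrum (hence with pure point spectrum)
are dense in the bounded self-adjoint operators: every bounded self-adjoint operator `H`
can be approximated within `ε` in operator norm by a bounded self-adjoint operator `T`
with countable spectrum. -/
theorem purePoint_dense_in_selfAdjoint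
    {𝓗 : Type*} [NormedAddCommGroup 𝓗] [InnerProductSpace ℂ 𝓗] [CompleteSpace 𝓗]
    (H : 𝓗 →L[ℂ] 𝓗) (hH : IsSelfAdjoint H) (ε : ℝ) (hε : 0 < ε) :
    ∃ T : 𝓗 →L[ℂ] 𝓗, IsSelfAdjoint T ∧ ‖H - T‖ ≤ ε ∧
      (spectrum ℂ T).Countable ∧
      (Submodule.span ℂ {ψ : 𝓗 | ψ ≠ 0 ∧ ∃ μ : ℂ, T ψ = μ • ψ}).topologicalClosure = ⊤ := by
  obtain ⟨n, hn⟩ := pow_unbounded_of_one_lt (‖H‖ / ε) (one_lt_two (α := ℝ))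
  obtain ⟨T, hT, hTn, -, ι, _, μ, Q, hQ, hTQ⟩ := aux_iter n H hH ‖H‖ le_rfl
  have hTQ' : ∀ i, T * Q i = (μ i : ℂ) • Q i := fun i => by
    rw [hTQ, Complex.coe_smul]
  refine ⟨T, hT, hTn.trans ?_, ?_, ?_⟩
  · rw [div_lt_iff₀ hε] at hn
    rw [div_le_iff₀ (by positivity)]
    linarith
  · refine (Set.finite_range (fun i => (μ i : ℂ))).countable.mono ?_
    intro z hz
    by_contra hne
    have hne' : ∀ i, (μ i : ℂ) - z ≠ 0 := fun i h => hne ⟨i, sub_eq_zero.1 h⟩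
    refine hz ?_
    have key : ∀ w : ℂ, (∀ i, (μ i : ℂ) - w ≠ 0) →
        (T - w • 1) * (∑ i, ((μ i : ℂ) - w)⁻¹ • Q i) = 1 := by
      intro w hw
      rw [Finset.mul_sum]
      refine Eq.trans ?_ hQ
      refine Finset.sum_congr rfl fun i _ => ?_
      rw [mul_smul_comm, sub_mul, hTQ', smul_mul_assoc, one_mul, ← sub_smul, smul_smul,
        inv_mul_cancel₀ (hw i), one_smul]
    have hne2 : ∀ i, (μ i : ℂ) - star z ≠ 0 := by
      intro i h
      apply hne' i
      have := congrArg star h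
      simpa using this
    have k1 := key z hne'
    have k2 := congrArg star (key (star z) hne2)
    rw [star_mul, star_sub, hT.star_eq, star_smul, star_star, star_one] at k2
    have hu : IsUnit (T - z • (1 : 𝓗 →L[ℂ] 𝓗)) :=
      isUnit_iff_exists_and_exists.2 ⟨⟨_, k1⟩, ⟨_, k2⟩⟩
    rw [spectrum.mem_resolventSet_iff, Algebra.algebraMap_eq_smul_one, ← neg_sub]
    exact hu.neg
  · rw [eq_top_iff]
    intro v _
    apply Submodule.le_topologicalClosure
    have hv : v = ∑ i, Q i v := by
      have := DFunLike.congr_fun hQ v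
      simpa using this.symm
    rw [hv]
    refine Submodule.sum_mem _ fun i _ => ?_
    by_cases h : Q i v = 0
    · rw [h]; exact Submodule.zero_mem _
    · refine Submodule.subset_span ⟨h, μ i, ?_⟩
      have := DFunLike.congr_fun (hTQ' i) v
      simpa using this
end

section
/- Let μ be the product measure on [0,1]^ℕ of countably many copies of Lebesgue measure on the unit interval [0,1]. Then for μ-almost every sequence x : ℕ → [0,1], the sequence x is uniformly distributed: for all real numbers a, b with 0 ≤ a ≤ b ≤ 1, the proportion (1/N)·card{i ∈ ℕ : i < N and a ≤ x_i ≤ b} tends to b − a as N → ∞. -/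
open MeasureTheory Filter

lemma vol_aux (p q : ℝ) : (volume : Measure unitInterval) {y | p ≤ (y:ℝ) ∧ (y:ℝ) ≤ q}
    = ENNReal.ofReal (min q 1 - max p 0) := by
  rw [Measure.Subtype.volume_def, comap_subtype_coe_apply (s := unitInterval) measurableSet_Icc]
  rw [← Real.volume_Icc]
  congr 1
  ext y
  simp only [Set.mem_image, Set.mem_ofPred_eq, Subtype.exists, unitInterval, Set.mem_Icc, le_min_iff, max_le_iff]
  constructor
  · rintro ⟨z, hz, h, rfl⟩
    exact ⟨⟨h.1, hz.1⟩, h.2, hz.2⟩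
  · rintro ⟨h, h'⟩
    exact ⟨y, ⟨h.2, h'.2⟩, ⟨h.1, h'.1⟩, rfl⟩

lemma slln_aux (μ : Measure (ℕ → unitInterval)) [IsProbabilityMeasure μ]
    (hμ : ∀ s : ℕ → Set unitInterval, (∀ i, MeasurableSet (s i)) →
      ∀ N : ℕ, μ {x | ∀ i < N, x i ∈ s i} = ∏ i ∈ Finset.range N, volume (s i)) (p q : ℝ) :
    ∀ᵐ x ∂μ, Tendsto
        (fun N : ℕ =>
          (Nat.card {i : ℕ | i < N ∧ p ≤ (x i : ℝ) ∧ (x i : ℝ) ≤ q} : ℝ) / (N : ℝ))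
        atTop (nhds (max (min q 1 - max p 0) 0)) := by
  classical
  have hpi : μ = Measure.infinitePi (fun _ : ℕ => (volume : Measure unitInterval)) := by
    refine Measure.eq_infinitePi _ fun s t ht => ?_
    obtain ⟨N, hN⟩ : ∃ N, s ⊆ Finset.range N := s.exists_nat_subset_range
    have h := hμ (fun i => if i ∈ s then t i else Set.univ) (fun i => by
      split_ifs
      · exact ht i
      · exact MeasurableSet.univ) N
    have e : {x : ℕ → unitInterval | ∀ i < N, x i ∈ (if i ∈ s then t i else Set.univ)}
        = Set.pi s t := by
      ext x
      simp only [Set.mem_ofPred_eq, Set.mem_pi, Finset.mem_coe]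
      constructor
      · intro h i hi
        have := h i (Finset.mem_range.1 (hN hi))
        rwa [if_pos hi] at this
      · intro h i _
        split_ifs with hi
        · exact h i hi
        · trivial
    rw [e] at h
    rw [h, ← Finset.prod_subset hN]
    · exact Finset.prod_congr rfl fun i hi => by rw [if_pos hi]
    · intro i _ hi
      rw [if_neg hi]; simp
  set S : Set unitInterval := {y | p ≤ (y:ℝ) ∧ (y:ℝ) ≤ q} with hS
  have mS : MeasurableSet S :=
    (measurableSet_le measurable_const measurable_subtype_coe).inter
      (measurableSet_le measurable_subtype_coe measurable_const)
  let g : unitInterval → ℝ := S.indicator 1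
  have mg : Measurable g := measurable_one.indicator mS
  have hev : ∀ i, Measure.map (fun x : ℕ → unitInterval => x i) μ = volume := by
    intro i; rw [hpi]; exact Measure.infinitePi_map_eval _ i
  have hI : ProbabilityTheory.iIndepFun (fun (i : ℕ) (x : ℕ → unitInterval) => g (x i)) μ := by
    rw [hpi]
    exact ProbabilityTheory.iIndepFun_infinitePi (X := fun _ => g) (fun _ => mg)
  have hid : ∀ i, ProbabilityTheory.IdentDistrib (fun x : ℕ → unitInterval => g (x i))
      (fun x => g (x 0)) μ μ := by
    intro i
    have h0 : ProbabilityTheory.IdentDistrib (fun x : ℕ → unitInterval => x i)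
      (fun x => x 0) μ μ := ⟨(measurable_pi_apply i).aemeasurable,
        (measurable_pi_apply 0).aemeasurable, by rw [hev, hev]⟩
    exact h0.comp mg
  have hE : ∫ x, g (x 0) ∂μ = max (min q 1 - max p 0) 0 := by
    rw [← integral_map (μ := μ) (φ := fun x : ℕ → unitInterval => x 0)
      (measurable_pi_apply 0).aemeasurable mg.aestronglyMeasurable, hev, integral_indicator_one mS,
      Measure.real, vol_aux, ENNReal.toReal_ofReal']
  have hint : Integrable (fun x : ℕ → unitInterval => g (x 0)) μ := by
    refine Integrable.of_bound (C := 1) (mg.comp (measurable_pi_apply 0)).aestronglyMeasurable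
      (Eventually.of_forall fun x => ?_)
    by_cases h : x 0 ∈ S <;> simp [g, h]
  have key := ProbabilityTheory.strong_law_ae_real _ hint
    (fun i j hij => hI.indepFun hij) hid
  rw [hE] at key
  filter_upwards [key] with x hx
  convert hx using 3 with N
  have : {i : ℕ | i < N ∧ p ≤ (x i : ℝ) ∧ (x i : ℝ) ≤ q}
      = ((Finset.range N).filter (fun i => x i ∈ S) : Finset ℕ) := by
    ext i; simp [hS]
  rw [this, Nat.card_coe_set_eq, Set.ncard_coe_finset, Finset.card_filter]
  push_cast
  exact Finset.sum_congr rfl fun i _ => by simp [g, Set.indicator_apply]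

lemma card_mono_aux (x : ℕ → unitInterval) (N : ℕ) {a b p q : ℝ} (h1 : p ≤ a) (h2 : b ≤ q) :
    (Nat.card {i : ℕ | i < N ∧ a ≤ (x i : ℝ) ∧ (x i : ℝ) ≤ b} : ℝ) / (N : ℝ) ≤
    (Nat.card {i : ℕ | i < N ∧ p ≤ (x i : ℝ) ∧ (x i : ℝ) ≤ q} : ℝ) / (N : ℝ) := by
  gcongr
  refine Nat.card_mono ((Set.finite_lt_nat N).subset fun i hi => hi.1) ?_
  rintro i ⟨h, h', h''⟩
  exact ⟨h, h1.trans h', h''.trans h2⟩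



/-- Let `μ` be the product, over countably many copies indexed by `ℕ`, of
the Lebesgue probability measure on the unit interval `[0,1]` (characterized here as a
probability measure on `ℕ → [0,1]` giving every cylinder set its product measure). Then
`μ`-almost every sequence `x : ℕ → [0,1]` is uniformly distributed: for all `0 ≤ a ≤ b ≤ 1`
the proportion of the first `N` terms lying in `[a,b]` tends to `b - a` as `N → ∞`. -/
theorem almost_every_sequence_uniformly_distributed
    (μ : Measure (ℕ → unitInterval)) [IsProbabilityMeasure μ]
    (hμ : ∀ s : ℕ → Set unitInterval, (∀ i, MeasurableSet (s i)) →
      ∀ N : ℕ, μ {x | ∀ i < N, x i ∈ s i} = ∏ i ∈ Finset.range N, volume (s i)) :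
    ∀ᵐ x ∂μ, ∀ a b : ℝ, 0 ≤ a → a ≤ b → b ≤ 1 →
      Tendsto
        (fun N : ℕ =>
          (Nat.card {i : ℕ | i < N ∧ a ≤ (x i : ℝ) ∧ (x i : ℝ) ≤ b} : ℝ) / (N : ℝ))
        atTop (nhds (b - a)) := by
  have key : ∀ᵐ x ∂μ, ∀ p q : ℚ, Tendsto
        (fun N : ℕ =>
          (Nat.card {i : ℕ | i < N ∧ (p:ℝ) ≤ (x i : ℝ) ∧ (x i : ℝ) ≤ (q:ℝ)} : ℝ) / (N : ℝ))
        atTop (nhds (max (min (q:ℝ) 1 - max (p:ℝ) 0) 0)) :=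
    ae_all_iff.2 fun p => ae_all_iff.2 fun q => slln_aux μ hμ p q
  filter_upwards [key] with x hx a b ha hab hb
  refine tendsto_order.2 ⟨fun c hc => ?_, fun c hc => ?_⟩
  · by_cases hc0 : c < 0
    · exact Eventually.of_forall fun N => hc0.trans_le (by positivity)
    · push Not at hc0
      obtain ⟨p, hp, hp'⟩ := exists_rat_btwn (show a < a + (b - a - c) / 2 by linarith)
      obtain ⟨q, hq, hq'⟩ := exists_rat_btwn (show b - (b - a - c) / 2 < b by linarith)
      have h : c < max (min (q:ℝ) 1 - max (p:ℝ) 0) 0 := by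
        rw [min_eq_left (by linarith), max_eq_left (a := (p:ℝ)) (by linarith)]
        exact lt_max_of_lt_left (by linarith)
      filter_upwards [(hx p q).eventually_const_lt h] with N hN
      exact hN.trans_le (card_mono_aux x N hp.le hq'.le)
  · obtain ⟨p, hp, hp'⟩ := exists_rat_btwn (show a - (c - (b - a)) / 2 < a by linarith)
    obtain ⟨q, hq, hq'⟩ := exists_rat_btwn (show b < b + (c - (b - a)) / 2 by linarith)
    have h : max (min (q:ℝ) 1 - max (p:ℝ) 0) 0 < c := by
      have h1 := min_le_left (q:ℝ) 1
      have h2 := le_max_left (p:ℝ) 0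
      exact max_lt (by linarith) (by linarith)
    filter_upwards [(hx p q).eventually_lt_const h] with N hN
    exact (card_mono_aux x N hp'.le hq.le).trans_lt hN
end
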